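/- arXiv:math/0004049 — 2 statements merged into one kernel-verified Lean document; each statement's English description precedes it below -/
import Mathlib

section
/- If S and T are linear operators on a topological vector space X over ℂ with ST = TS, and both r_c(S) and r_c(T) are finite, then r_c(ST) ≤ r_c(S)·r_c(T). -/
open Filter Topology Bornology Set Pointwise ENNReal

variable {X Y : Type*} [AddCommGroup X] [Module ℂ X] [TopologicalSpace X]
  [AddCommGroup Y] [Module ℂ Y] [TopologicalSpace Y]

/-- `T` maps every bounded set to a bounded set. -/
def IsBBBounded (T : X →ₗ[ℂ] Y) : Prop :=
  ∀ A : Set X, IsVonNBounded ℂ A → IsVonNBounded ℂ (T '' A)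

/-- `T` maps some neighborhood of zero to a bounded set. -/
def IsNBBounded (T : X →ₗ[ℂ] Y) : Prop :=
  ∃ U ∈ 𝓝 (0 : X), IsVonNBounded ℂ (T '' U)

/-- `𝒩` is a base of neighborhoods of zero. -/
def IsZeroBasis (𝒩 : Set (Set X)) : Prop :=
  (∀ U ∈ 𝒩, U ∈ 𝓝 (0 : X)) ∧ ∀ V ∈ 𝓝 (0 : X), ∃ U ∈ 𝒩, U ⊆ V

/-- There is a base of neighborhoods of zero each member of which is mapped by `T`
into a positive multiple of itself. -/
def IsNNBounded (T : X →ₗ[ℂ] X) : Prop :=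
  ∃ 𝒩 : Set (Set X), IsZeroBasis 𝒩 ∧
    ∀ U ∈ 𝒩, ∃ α : ℝ, 0 < α ∧ T '' U ⊆ (α : ℂ) • U

noncomputable def rl (T : X →ₗ[ℂ] X) : ℝ≥0∞ :=
  sInf (ENNReal.ofReal '' {ν : ℝ | 0 < ν ∧ ∀ x : X,
    Tendsto (fun n : ℕ => ((ν : ℂ) ^ n)⁻¹ • (T ^ n) x) atTop (𝓝 0)})

noncomputable def rbb (T : X →ₗ[ℂ] X) : ℝ≥0∞ :=
  sInf (ENNReal.ofReal '' {ν : ℝ | 0 < ν ∧ ∀ A : Set X, IsVonNBounded ℂ A →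
    ∀ V ∈ 𝓝 (0 : X), ∀ᶠ n : ℕ in atTop,
      (fun x => ((ν : ℂ) ^ n)⁻¹ • (T ^ n) x) '' A ⊆ V})

noncomputable def rc (T : X →ₗ[ℂ] X) : ℝ≥0∞ :=
  sInf (ENNReal.ofReal '' {ν : ℝ | 0 < ν ∧ ∀ V ∈ 𝓝 (0 : X), ∃ U ∈ 𝓝 (0 : X),
    ∀ ε : ℝ, 0 < ε → ∀ᶠ n : ℕ in atTop,
      (fun x => ((ν : ℂ) ^ n)⁻¹ • (T ^ n) x) '' U ⊆ (ε : ℂ) • V})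

noncomputable def rnn (T : X →ₗ[ℂ] X) : ℝ≥0∞ :=
  sInf (ENNReal.ofReal '' {ν : ℝ | 0 < ν ∧ ∃ 𝒩 : Set (Set X), IsZeroBasis 𝒩 ∧
    ∀ U ∈ 𝒩, ∀ ε : ℝ, 0 < ε → ∀ᶠ n : ℕ in atTop,
      (fun x => ((ν : ℂ) ^ n)⁻¹ • (T ^ n) x) '' U ⊆ (ε : ℂ) • U})

noncomputable def rnb (T : X →ₗ[ℂ] X) : ℝ≥0∞ :=
  sInf (ENNReal.ofReal '' {ν : ℝ | 0 < ν ∧ ∃ U ∈ 𝓝 (0 : X), ∀ V ∈ 𝓝 (0 : X),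
    ∀ᶠ n : ℕ in atTop, (fun x => ((ν : ℂ) ^ n)⁻¹ • (T ^ n) x) '' U ⊆ V})

/-- The operator `λI - T`. -/
def lamOp (T : X →ₗ[ℂ] X) (l : ℂ) : X →ₗ[ℂ] X := l • LinearMap.id - T

def sigmaL (T : X →ₗ[ℂ] X) : Set ℂ := {l | ¬ Function.Bijective (lamOp T l)}

def sigmaBB (T : X →ₗ[ℂ] X) : Set ℂ :=
  {l | ¬ ∃ S : X →ₗ[ℂ] X, S ∘ₗ lamOp T l = LinearMap.id ∧
    lamOp T l ∘ₗ S = LinearMap.id ∧ IsBBBounded S}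

def sigmaC (T : X →ₗ[ℂ] X) : Set ℂ :=
  {l | ¬ ∃ S : X →ₗ[ℂ] X, S ∘ₗ lamOp T l = LinearMap.id ∧
    lamOp T l ∘ₗ S = LinearMap.id ∧ Continuous S}

def sigmaNN (T : X →ₗ[ℂ] X) : Set ℂ :=
  {l | ¬ ∃ S : X →ₗ[ℂ] X, S ∘ₗ lamOp T l = LinearMap.id ∧
    lamOp T l ∘ₗ S = LinearMap.id ∧ IsNNBounded S}

def sigmaNB (T : X →ₗ[ℂ] X) : Set ℂ :=
  {l | ¬ ∃ (α : ℂ) (S : X →ₗ[ℂ] X), IsNBBounded S ∧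
    (α • LinearMap.id + S) ∘ₗ lamOp T l = LinearMap.id ∧
    lamOp T l ∘ₗ (α • LinearMap.id + S) = LinearMap.id}

/-- Partial sums of the Neumann series. -/
noncomputable def neumann (T : X →ₗ[ℂ] X) (l : ℂ) (n : ℕ) (x : X) : X :=
  ∑ i ∈ Finset.range (n + 1), (l ^ (i + 1))⁻¹ • (T ^ i) x

/-- Every Cauchy sequence converges. -/
def SeqComplete (X : Type*) [AddCommGroup X] [TopologicalSpace X] : Prop :=
  ∀ u : ℕ → X, (∀ V ∈ 𝓝 (0 : X), ∃ N : ℕ, ∀ m ≥ N, ∀ n ≥ N, u m - u n ∈ V) →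
    ∃ x : X, Tendsto u atTop (𝓝 x)

/-- `K` maps some neighborhood of zero to a set with compact closure. -/
def IsCompactOp (K : X →ₗ[ℂ] X) : Prop :=
  ∃ U ∈ 𝓝 (0 : X), IsCompact (closure (K '' U))

/-- If `S` and `T` commute and `r_c(S), r_c(T)` are finite, then
`r_c(ST) ≤ r_c(S)·r_c(T)`. -/
theorem rc_mul_le_of_commute (S T : X →ₗ[ℂ] X) (hcomm : S * T = T * S)
    (hS : rc S < ⊤) (hT : rc T < ⊤) :
    rc (S * T) ≤ rc S * rc T := by
  refine ENNReal.le_mul_of_forall_lt (Or.inr hT.ne) (Or.inl hS.ne) ?_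
  intro a ha b hb
  obtain ⟨_, ⟨μ, ⟨hμ, h1⟩, rfl⟩, hμa⟩ := sInf_lt_iff.1 ha
  obtain ⟨_, ⟨ν, ⟨hν, h2⟩, rfl⟩, hνb⟩ := sInf_lt_iff.1 hb
  refine le_trans ?_ (mul_le_mul' hμa.le hνb.le)
  rw [← ENNReal.ofReal_mul hμ.le]
  refine sInf_le ⟨μ * ν, ⟨mul_pos hμ hν, ?_⟩, rfl⟩
  intro V hV
  obtain ⟨W, hW, h1⟩ := h1 V hV
  obtain ⟨U, hU, h2⟩ := h2 W hW
  refine ⟨U, hU, fun ε hε => ?_⟩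
  filter_upwards [h1 ε hε, h2 1 one_pos] with n hn1 hn2
  rintro _ ⟨x, hx, rfl⟩
  have hy : ((ν : ℂ) ^ n)⁻¹ • (T ^ n) x ∈ W := by
    simpa using hn2 ⟨x, hx, rfl⟩
  have hz := hn1 ⟨_, hy, rfl⟩
  have hc : (S * T) ^ n = S ^ n * T ^ n := Commute.mul_pow hcomm n
  have : (((μ * ν : ℝ) : ℂ) ^ n)⁻¹ • ((S * T) ^ n) x
      = ((μ : ℂ) ^ n)⁻¹ • (S ^ n) (((ν : ℂ) ^ n)⁻¹ • (T ^ n) x) := by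
    rw [hc, map_smul, smul_smul, Complex.ofReal_mul, mul_pow, mul_inv]
    rfl
  simpa only [this] using hz
end

section
/- If T is an nb-bounded linear operator on a topological vector space X over ℂ, then r_bb(T) = r_c(T) = r_nn(T) = r_nb(T). -/
open Filter Topology Bornology Set Pointwise ENNReal

variable {X Y : Type*} [AddCommGroup X] [Module ℂ X] [TopologicalSpace X]
  [AddCommGroup Y] [Module ℂ Y] [TopologicalSpace Y]

theorem aux_le {S S' : Set ℝ} (h : ∀ ν ∈ S, ∀ ν' : ℝ, ν < ν' → ν' ∈ S') :
    sInf (ENNReal.ofReal '' S') ≤ sInf (ENNReal.ofReal '' S) := by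
  refine le_sInf ?_
  rintro _ ⟨ν, hν, rfl⟩
  have ht : Tendsto (fun x : ℝ => ENNReal.ofReal x) (𝓝[>] ν) (𝓝 (ENNReal.ofReal ν)) :=
    (ENNReal.continuous_ofReal.tendsto ν).mono_left nhdsWithin_le_nhds
  refine ge_of_tendsto ht ?_
  filter_upwards [self_mem_nhdsWithin] with x hx
  exact sInf_le ⟨x, h ν hν x hx, rfl⟩

theorem aux_le' {S S' : Set ℝ} (h : ∀ ν ∈ S, ν ∈ S') :
    sInf (ENNReal.ofReal '' S') ≤ sInf (ENNReal.ofReal '' S) :=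
  sInf_le_sInf (Set.image_mono h)

theorem aux_shift {p : ℕ → Prop} (h : ∀ᶠ n in atTop, p (n + 1)) : ∀ᶠ n in atTop, p n := by
  obtain ⟨N, hN⟩ := eventually_atTop.1 h
  refine eventually_atTop.2 ⟨N + 1, fun n hn => ?_⟩
  obtain ⟨m, rfl⟩ : ∃ m, n = m + 1 := ⟨n - 1, by omega⟩
  exact hN m (by omega)

theorem aux_bdd {A U : Set X} (h : Absorbs ℂ U A) :
    ∃ R : ℝ, 0 < R ∧ ∀ c : ℝ, R ≤ c → A ⊆ (c : ℂ) • U := by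
  have h1 : ∀ᶠ c : ℝ in atTop, A ⊆ (c : ℂ) • U := by
    have : Tendsto (fun c : ℝ => (c : ℂ)) atTop (cobounded ℂ) := by
      rw [← tendsto_norm_atTop_iff_cobounded]
      simpa using tendsto_abs_atTop_atTop
    exact this.eventually h
  obtain ⟨R, hR⟩ := eventually_atTop.1 h1
  exact ⟨max R 1, by positivity, fun c hc => hR c (le_trans (le_max_left _ _) hc)⟩

theorem aux_smul_bdd {A : Set X} (h : IsVonNBounded ℂ A) {d : ℂ} (hd : d ≠ 0) :
    IsVonNBounded ℂ (d • A) := by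
  intro V hV
  have h1 := h hV
  have : Tendsto (fun c : ℂ => d⁻¹ * c) (cobounded ℂ) (cobounded ℂ) := by
    rw [← tendsto_norm_atTop_iff_cobounded]
    simp only [norm_mul]
    exact tendsto_norm_cobounded_atTop.const_mul_atTop (norm_pos_iff.2 (inv_ne_zero hd))
  filter_upwards [this.eventually h1] with c hc
  rintro _ ⟨a, ha, rfl⟩
  obtain ⟨v, hv, hva⟩ := hc ha
  refine ⟨v, hv, ?_⟩
  simp only at hva ⊢
  rw [← hva, smul_smul, mul_inv_cancel_left₀ hd]

theorem aux_key (T : X →ₗ[ℂ] X) (hT : IsNBBounded T) {ν ν' : ℝ} (hν : 0 < ν) (hlt : ν < ν')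
    (h : ∃ U ∈ 𝓝 (0 : X), ∀ V ∈ 𝓝 (0 : X),
      ∀ᶠ n : ℕ in atTop, (fun x => ((ν : ℂ) ^ n)⁻¹ • (T ^ n) x) '' U ⊆ V) :
    ∃ U ∈ 𝓝 (0 : X), ∀ V ∈ 𝓝 (0 : X), ∀ ε : ℝ, 0 < ε →
      ∀ᶠ n : ℕ in atTop, (fun x => ((ν' : ℂ) ^ n)⁻¹ • (T ^ n) x) '' U ⊆ (ε : ℂ) • V := by
  obtain ⟨U0, hU0, hb⟩ := hT
  obtain ⟨U, hU, h⟩ := h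
  obtain ⟨R, hR, hRc⟩ := aux_bdd (hb hU)
  have hν' : 0 < ν' := hν.trans hlt
  refine ⟨U0, hU0, fun V hV ε hε => ?_⟩
  refine aux_shift ?_
  have hlim : Tendsto (fun n : ℕ => ε * ν' * (ν' / ν) ^ n) atTop atTop :=
    (tendsto_pow_atTop_atTop_of_one_lt ((one_lt_div hν).2 hlt)).const_mul_atTop (by positivity)
  filter_upwards [h V hV, hlim.eventually_ge_atTop R] with n hn hge
  rintro _ ⟨x, hx, rfl⟩
  obtain ⟨u, hu, hux⟩ := hRc _ hge ⟨x, hx, rfl⟩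
  refine ⟨((ν : ℂ) ^ n)⁻¹ • (T ^ n) u, hn ⟨u, hu, rfl⟩, ?_⟩
  have h1 : (ν : ℂ) ≠ 0 := by exact_mod_cast hν.ne'
  have h2 : (ν' : ℂ) ≠ 0 := by exact_mod_cast hν'.ne'
  simp only at hux ⊢
  rw [pow_succ T, Module.End.mul_apply, ← hux, map_smul, smul_smul, smul_smul]
  congr 1
  push_cast
  rw [div_pow]
  field_simp
  try ring

/-- For an nb-bounded operator `T`, `r_bb(T) = r_c(T) = r_nn(T) = r_nb(T)`. -/
theorem rbb_eq_rc_eq_rnn_eq_rnb (T : X →ₗ[ℂ] X) (hT : IsNBBounded T) :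
    rbb T = rc T ∧ rc T = rnn T ∧ rnn T = rnb T := by
  have e1 : rnb T ≤ rbb T := by
    refine aux_le' ?_
    rintro ν ⟨hν, h⟩
    refine ⟨hν, ?_⟩
    obtain ⟨U0, hU0, hb⟩ := hT
    have h1 : (ν : ℂ) ≠ 0 := by exact_mod_cast hν.ne'
    refine ⟨U0, hU0, fun V hV => ?_⟩
    refine aux_shift ?_
    filter_upwards [h _ (aux_smul_bdd hb (inv_ne_zero h1)) V hV] with n hn
    rintro _ ⟨x, hx, rfl⟩
    refine hn ⟨(ν : ℂ)⁻¹ • T x, ⟨T x, ⟨x, hx, rfl⟩, rfl⟩, ?_⟩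
    simp only
    rw [pow_succ T, Module.End.mul_apply, map_smul, smul_smul]
    congr 1
    field_simp
    ring
  have scal : ∀ (ν : ℝ) (A U V : Set X), IsVonNBounded ℂ A → U ∈ 𝓝 (0 : X) →
      (∀ ε : ℝ, 0 < ε → ∀ᶠ n : ℕ in atTop,
        (fun x => ((ν : ℂ) ^ n)⁻¹ • (T ^ n) x) '' U ⊆ (ε : ℂ) • V) →
      ∀ᶠ n : ℕ in atTop, (fun x => ((ν : ℂ) ^ n)⁻¹ • (T ^ n) x) '' A ⊆ V := by
    intro ν A U V hA hU h
    obtain ⟨R, hR, hRc⟩ := aux_bdd (hA hU)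
    have hR' : (R : ℂ) ≠ 0 := by exact_mod_cast hR.ne'
    filter_upwards [h R⁻¹ (by positivity)] with n hn
    rintro _ ⟨x, hx, rfl⟩
    obtain ⟨u, hu, rfl⟩ := hRc R le_rfl hx
    obtain ⟨v, hv, hvu⟩ := hn ⟨u, hu, rfl⟩
    simp only at hvu ⊢
    rw [map_smul, smul_comm, ← hvu, smul_smul]
    push_cast
    rwa [mul_inv_cancel₀ hR', one_smul]
  have e2 : rbb T ≤ rc T := by
    refine aux_le' ?_
    rintro ν ⟨hν, h⟩
    refine ⟨hν, fun A hA V hV => ?_⟩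
    obtain ⟨U, hU, h⟩ := h V hV
    exact scal ν A U V hA hU h
  have e3 : rbb T ≤ rnn T := by
    refine aux_le' ?_
    rintro ν ⟨hν, N, ⟨hN1, hN2⟩, h⟩
    refine ⟨hν, fun A hA V hV => ?_⟩
    obtain ⟨U, hU, hUV⟩ := hN2 V hV
    filter_upwards [scal ν A U U hA (hN1 U hU) (h U hU)] with n hn
    exact hn.trans hUV
  have e4 : rc T ≤ rnb T := by
    refine aux_le ?_
    rintro ν ⟨hν, h⟩ ν' hlt
    obtain ⟨U, hU, h⟩ := aux_key T hT hν hlt h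
    exact ⟨hν.trans hlt, fun V hV => ⟨U, hU, h V hV⟩⟩
  have e5 : rnn T ≤ rnb T := by
    refine aux_le ?_
    rintro ν ⟨hν, h⟩ ν' hlt
    obtain ⟨U, hU, h⟩ := aux_key T hT hν hlt h
    refine ⟨hν.trans hlt, {W | W ∈ 𝓝 (0 : X) ∧ W ⊆ U}, ⟨fun W hW => hW.1, fun V hV =>
      ⟨V ∩ U, ⟨inter_mem hV hU, inter_subset_right⟩, inter_subset_left⟩⟩, ?_⟩
    rintro W ⟨hW, hWU⟩ ε hε
    filter_upwards [h W hW ε hε] with n hn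
    exact (Set.image_mono hWU).trans hn
  have a1 := le_antisymm e2 (e4.trans e1)
  have a2 := le_antisymm e5 (e1.trans e3)
  exact ⟨a1, (le_antisymm (e4.trans (e1.trans e3)) (e5.trans (e1.trans e2))), a2⟩
end
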